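/- arXiv:2512.04633 — 2 statements merged into one kernel-verified Lean document; each statement's English description precedes it below -/
import Mathlib

section
/- For every pair (γ, s) with 1 ≤ s ≤ 2 and 2/(s+1) ≤ γ ≤ c(s), there exists a Minkowski centered convex body K ⊆ ℝ² such that s(K) = s and γ(K) = γ. -/
open scoped Pointwise RealInnerProductSpace
open Set

noncomputable section

abbrev E2 := EuclideanSpace ℝ (Fin 2)

/-- A convex body: compact convex set with nonempty interior. -/
def IsConvexBody (K : Set E2) : Prop :=
  Convex ℝ K ∧ IsCompact K ∧ (interior K).Nonempty

/-- circumradius `R(K,C)` -/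
def circum (K C : Set E2) : ℝ :=
  sInf {ρ : ℝ | 0 < ρ ∧ ∃ t : E2, K ⊆ ρ • C + {t}}

/-- inradius `r(K,C)` -/
def inrad (K C : Set E2) : ℝ :=
  sSup {ρ : ℝ | 0 < ρ ∧ ∃ t : E2, ρ • C + {t} ⊆ K}

/-- width `w(K,C)` -/
def widthB (K C : Set E2) : ℝ := 2 * inrad (K - K) (C - C)

/-- diameter `D(K,C)` -/
def diamB (K C : Set E2) : ℝ := 2 * circum (K - K) (C - C)

/-- Minkowski asymmetry `s(K)` -/
def minkAsym (K : Set E2) : ℝ :=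
  sInf {ρ : ℝ | 0 < ρ ∧ ∃ c : E2, K - {c} ⊆ ρ • ({c} - K)}

/-- `K` is Minkowski centered -/
def MinkCentered (K : Set E2) : Prop := K ⊆ minkAsym K • (-K)

/-- `τ(K)`: smallest `ρ > 0` with `K ∩ (-K) ⊆ ρ • ((K-K)/2)` -/
def tauB (K : Set E2) : ℝ :=
  sInf {ρ : ℝ | 0 < ρ ∧ K ∩ (-K) ⊆ ρ • ((2:ℝ)⁻¹ • (K - K))}

/-- golden ratio -/
def phiR : ℝ := (1 + Real.sqrt 5) / 2

def cExpr2 (s : ℝ) : ℝ :=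
  (s^2+1)^2 / ((s^2-1) * (s^2+2*s-1+2*Real.sqrt (s*(s^2-1))))

def cExpr3 (s : ℝ) : ℝ := 2*(s^2-2*s-1) / ((s-3)*(s+1))

/-- `ŝ`: the unique `s ∈ (φ,2)` where the two expressions agree. -/
def sHat : ℝ := sInf {s : ℝ | phiR < s ∧ s < 2 ∧ cExpr2 s = cExpr3 s}

def cFun (s : ℝ) : ℝ :=
  if s ≤ phiR then 1 else if s ≤ sHat then cExpr2 s else cExpr3 s

/-- polar body -/
def polarBody (K : Set E2) : Set E2 := {y | ∀ x ∈ K, (inner ℝ x y : ℝ) ≤ 1}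

/-- `γ(K)` -/
def gammaB (K : Set E2) : ℝ :=
  sInf {ρ : ℝ | 0 < ρ ∧
    polarBody ((2:ℝ)⁻¹ • (polarBody K - polarBody K)) ⊆ ρ • convexHull ℝ (K ∪ -K)}

/-- positive hull of two points -/
def posHull2 (a b : E2) : Set E2 := {x | ∃ α β : ℝ, 0 ≤ α ∧ 0 ≤ β ∧ x = α • a + β • b}

/-- asymmetry point of `K`: a point of `bd(K) ∩ bd(−(1/s(K))·K)` -/
def IsAsymPoint (K : Set E2) (p : E2) : Prop :=
  p ∈ frontier K ∧ p ∈ frontier ((-(minkAsym K)⁻¹) • K)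

/-- a well-spread triple of asymmetry points -/
def WellSpread (K : Set E2) (p1 p2 p3 : E2) : Prop :=
  IsAsymPoint K p1 ∧ IsAsymPoint K p2 ∧ IsAsymPoint K p3 ∧
  ∃ a1 a2 a3 : E2, a1 ≠ 0 ∧ a2 ≠ 0 ∧ a3 ≠ 0 ∧
    (∀ x ∈ K, (inner ℝ a1 x : ℝ) ≤ inner ℝ a1 p1) ∧
    (∀ x ∈ K, (inner ℝ a2 x : ℝ) ≤ inner ℝ a2 p2) ∧
    (∀ x ∈ K, (inner ℝ a3 x : ℝ) ≤ inner ℝ a3 p3) ∧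
    (0:E2) ∈ interior (convexHull ℝ {p1, p2, p3}) ∧
    (0:E2) ∈ convexHull ℝ {a1, a2, a3}

/-- two points of `bd(K) ∩ bd(-K)` are consecutive -/
def Consecutive (K : Set E2) (z1 z2 : E2) : Prop :=
  ¬ ∃ z, z ∈ frontier K ∩ frontier (-K) ∧ z ∈ interior (posHull2 z1 z2)

/-- point of the plane from coordinates -/
def pt (x y : ℝ) : E2 := (WithLp.equiv 2 (Fin 2 → ℝ)).symm ![x, y]

/-- the golden house -/
def goldenHouse : Set E2 :=
  convexHull ℝ {pt 1 0, pt (-1) 0, pt 1 (-1), pt (-1) (-1), pt 0 phiR}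

/-!
Let `T` be a triangle with normals `v i` balanced around `0`, and let `K r` be `T ∩ (-s • T)` cut by
the strip `|x 0| ≤ r`. As long as `r ≥ 1` the points where `T ∩ (-s • T)` touches the edges of
`-s • T` survive, and they force the Minkowski asymmetry to be `s`. The bodies `K r` and `K r'` are
sandwiched between dilates of each other with factors tending to `1` as `r' → r`, so `γ (K r)`
depends continuously on `r`, and it suffices to control it at two values of `r`.

If `r` is so large that the strip is redundant, a point `x` of the harmonic mean, scaled by
`(s + 1) / 2`, lies in `conv (K ∪ -K)`: if it violates an upper constraint of `K` and one of `-K`,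
moving it in both directions along the common vertex of the two edges of `T` lands in `K` and `-K`.
Hence `γ ≤ 2 / (s + 1)`.

If `r = 1` and a point `q` with `q 0 = 1` satisfies `q ∈ K` and `-q / A ∈ K`, then `2 / (1 + A) • q`
lies in the harmonic mean while `conv (K ∪ -K)` lies in the strip, so `γ ≥ 2 / (1 + A)`.

For `s ≤ φ` an isosceles `T` allows `A = 1`. For `s > φ` the triangles form a family in a parameter
`D ∈ [0, 2 - s]`, and optimizing `2 / (1 + A)` over `D` gives `c(s)`: the maximum is attained in the
interior of the interval for `s < ŝ` and at `D = 2 - s` for `s ≥ ŝ`.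
-/

section Slab

variable {E : Type*} [NormedAddCommGroup E] [InnerProductSpace ℝ E]
  {u x : E} {a b c d t : ℝ}

/-- The slab `-a ≤ ⟪u, x⟫ ≤ b` with normal vector `u`. -/
def slab (u : E) (a b : ℝ) : Set E := {x | ⟪u, x⟫ ∈ Icc (-a) b}

lemma convex_slab (u : E) (a b : ℝ) : Convex ℝ (slab u a b) :=
  (convex_Icc (-a) b).linear_preimage (innerₛₗ ℝ u)

lemma isClosed_slab (u : E) (a b : ℝ) : IsClosed (slab u a b) :=
  isClosed_Icc.preimage (by fun_prop : Continuous fun x : E ↦ ⟪u, x⟫)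

lemma slab_mem_nhds_zero (u : E) (ha : 0 < a) (hb : 0 < b) : slab u a b ∈ nhds 0 := by
  have hcont : ContinuousAt (fun x : E ↦ ⟪u, x⟫) 0 := by fun_prop
  refine hcont.preimage_mem_nhds (Icc_mem_nhds ?_ ?_) <;> simpa

lemma slab_subset_slab (hac : a ≤ c) (hbd : b ≤ d) : slab u a b ⊆ slab u c d :=
  fun _ hx ↦ Icc_subset_Icc (neg_le_neg hac) hbd hx

lemma neg_mem_slab : -x ∈ slab u a b ↔ x ∈ slab u b a := by
  simp only [slab, mem_ofPred_eq, inner_neg_right, mem_Icc]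
  constructor <;> rintro ⟨h, h'⟩ <;> constructor <;> linarith

lemma smul_mem_slab (ht : 0 ≤ t) (hx : x ∈ slab u a b) : t • x ∈ slab u (t * a) (t * b) := by
  simp only [slab, mem_ofPred_eq, real_inner_smul_right, mem_Icc, ← mul_neg]
  exact ⟨mul_le_mul_of_nonneg_left hx.1 ht, mul_le_mul_of_nonneg_left hx.2 ht⟩

end Slab

section SymmHull

variable {E : Type*} [AddCommGroup E] [Module ℝ E] {K L : Set E} {l : ℝ}

/-- The convex hull of `K` and `-K`. -/
def symmHull (K : Set E) : Set E := convexHull ℝ (K ∪ -K)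

lemma subset_symmHull (K : Set E) : K ⊆ symmHull K :=
  subset_union_left.trans (subset_convexHull ℝ _)

lemma neg_subset_symmHull (K : Set E) : -K ⊆ symmHull K :=
  subset_union_right.trans (subset_convexHull ℝ _)

lemma symmHull_subset_smul (h : K ⊆ l • L) : symmHull K ⊆ l • symmHull L := by
  rw [symmHull, symmHull, ← convexHull_smul, smul_set_union, smul_set_neg]
  exact convexHull_mono (union_subset_union h (neg_subset_neg.2 h))

lemma symmHull_subset_slab {E : Type*} [NormedAddCommGroup E] [InnerProductSpace ℝ E] {K : Set E}
    {u : E} {r : ℝ} (h : K ⊆ slab u r r) : symmHull K ⊆ slab u r r :=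
  convexHull_min (union_subset h fun _ hx ↦ neg_mem_slab.1 (h hx)) (convex_slab u r r)

end SymmHull

section HarmonicMean

variable {K L : Set E2} {u v x q : E2} {a b l m r t ρ A : ℝ}

/-- The harmonic mean `((K° - K°) / 2)°` of `K` and `-K`. -/
def harmonicMean (K : Set E2) : Set E2 := polarBody ((2 : ℝ)⁻¹ • (polarBody K - polarBody K))

lemma mem_harmonicMean :
    x ∈ harmonicMean K ↔ ∀ y ∈ polarBody K, ∀ z ∈ polarBody K, ⟪y, x⟫ - ⟪z, x⟫ ≤ 2 := by
  constructor
  · intro h y hy z hz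
    have := h _ (smul_mem_smul_set (a := (2 : ℝ)⁻¹) (sub_mem_sub hy hz))
    rw [real_inner_smul_left, inner_sub_left] at this
    linarith
  · rintro h _ ⟨_, ⟨y, hy, z, hz, rfl⟩, rfl⟩
    simp only [real_inner_smul_left, inner_sub_left]
    linarith [h y hy z hz]

lemma smul_mem_polarBody (hl : 0 < l) (h : K ⊆ l • L) {y : E2} (hy : y ∈ polarBody L) :
    l⁻¹ • y ∈ polarBody K := by
  intro x hx
  obtain ⟨z, hz, rfl⟩ := h hx
  simpa [real_inner_smul_left, real_inner_smul_right, hl.ne'] using hy z hz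

lemma harmonicMean_subset_smul (hl : 0 < l) (h : K ⊆ l • L) :
    harmonicMean K ⊆ l • harmonicMean L := by
  intro x hx
  rw [mem_smul_set_iff_inv_smul_mem₀ hl.ne', mem_harmonicMean]
  intro y hy z hz
  simpa only [real_inner_smul_left, real_inner_smul_right] using
    mem_harmonicMean.1 hx _ (smul_mem_polarBody hl h hy) _ (smul_mem_polarBody hl h hz)

lemma inv_smul_mem_polarBody (hb : 0 < b) (h : K ⊆ slab u a b) : b⁻¹ • u ∈ polarBody K := by
  intro x hx
  rw [real_inner_smul_right, real_inner_comm, inv_mul_le_one₀ hb]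
  exact (h hx).2

lemma neg_inv_smul_mem_polarBody (ha : 0 < a) (h : K ⊆ slab u a b) :
    -(a⁻¹ • u) ∈ polarBody K := by
  rw [← smul_neg]
  refine inv_smul_mem_polarBody (a := b) ha fun x hx ↦ ?_
  simpa [slab, and_comm, neg_le] using h hx

lemma harmonicMean_subset_slab (ha : 0 < a) (hb : 0 < b) (h : K ⊆ slab u a b) :
    harmonicMean K ⊆ slab u (2 * a * b / (a + b)) (2 * a * b / (a + b)) := by
  intro x hx
  have hpos := inv_smul_mem_polarBody hb h
  have hneg := neg_inv_smul_mem_polarBody ha h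
  have hupper := mem_harmonicMean.1 hx _ hpos _ hneg
  have hlower := mem_harmonicMean.1 hx _ hneg _ hpos
  simp only [inner_neg_left, real_inner_smul_left] at hupper hlower
  have hsum : b⁻¹ * ⟪u, x⟫ + a⁻¹ * ⟪u, x⟫ = (a + b) * ⟪u, x⟫ / (a * b) := by field_simp
  have habs : |(a + b) * ⟪u, x⟫ / (a * b)| ≤ 2 := by rw [← hsum, abs_le]; constructor <;> linarith
  rw [abs_div, abs_mul, abs_of_pos (by positivity : 0 < a * b), div_le_iff₀ (by positivity),
    abs_of_pos (by positivity : 0 < a + b), ← le_div_iff₀' (by positivity), ← mul_assoc] at habs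
  exact abs_le.1 habs

lemma gammaB_le (hρ : 0 < ρ) (h : harmonicMean K ⊆ ρ • symmHull K) : gammaB K ≤ ρ :=
  csInf_le ⟨0, fun _ h ↦ h.1.le⟩ ⟨hρ, h⟩

lemma le_gammaB (hK : ∃ ρ : ℝ, 0 < ρ ∧ harmonicMean K ⊆ ρ • symmHull K)
    (h : ∀ ρ : ℝ, 0 < ρ → harmonicMean K ⊆ ρ • symmHull K → t ≤ ρ) : t ≤ gammaB K :=
  le_csInf hK fun ρ hρ ↦ h ρ hρ.1 hρ.2

lemma gammaB_le_mul (hl : 0 < l) (hm : 0 < m) (hKL : K ⊆ l • L) (hLK : L ⊆ m • K)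
    (hL : ∃ ρ : ℝ, 0 < ρ ∧ harmonicMean L ⊆ ρ • symmHull L) :
    gammaB K ≤ l * m * gammaB L := by
  rw [← div_le_iff₀' (by positivity)]
  refine le_gammaB hL fun ρ hρ hsub ↦ ?_
  rw [div_le_iff₀' (by positivity)]
  refine gammaB_le (by positivity) ?_
  calc harmonicMean K ⊆ l • harmonicMean L := harmonicMean_subset_smul hl hKL
    _ ⊆ l • ρ • symmHull L := by gcongr
    _ ⊆ l • ρ • m • symmHull K := by gcongr; exact symmHull_subset_smul hLK
    _ = (l * m * ρ) • symmHull K := by simp only [smul_smul]; ring_nf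

lemma smul_mem_harmonicMean (hA : 0 < A) (hq : q ∈ K) (hq' : -(A⁻¹ • q) ∈ K) :
    (2 / (1 + A)) • q ∈ harmonicMean K := by
  rw [mem_harmonicMean]
  intro y hy z hz
  have hyq : ⟪y, q⟫ ≤ 1 := by simpa only [real_inner_comm] using hy q hq
  have hzq : -⟪z, q⟫ ≤ A := by
    have := hz _ hq'
    rwa [inner_neg_left, real_inner_smul_left, real_inner_comm, ← mul_neg, inv_mul_le_one₀ hA]
      at this
  rw [real_inner_smul_right, real_inner_smul_right, ← mul_sub, div_mul_eq_mul_div,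
    div_le_iff₀ (by positivity)]
  linarith

lemma two_div_one_add_le_gammaB (hK : ∃ ρ : ℝ, 0 < ρ ∧ harmonicMean K ⊆ ρ • symmHull K)
    (hA : 0 < A) (hu : K ⊆ slab u 1 1) (hq : q ∈ K) (hq' : -(A⁻¹ • q) ∈ K) (huq : ⟪u, q⟫ = 1) :
    2 / (1 + A) ≤ gammaB K := by
  refine le_gammaB hK fun ρ hρ hsub ↦ ?_
  obtain ⟨y, hy, hyq⟩ := hsub (smul_mem_harmonicMean hA hq hq')
  have huy : ⟪u, y⟫ ≤ 1 := (symmHull_subset_slab hu hy).2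
  calc 2 / (1 + A) = ⟪u, (2 / (1 + A)) • q⟫ := by rw [real_inner_smul_right, huq, mul_one]
    _ = ρ * ⟪u, y⟫ := by rw [← hyq, real_inner_smul_right]
    _ ≤ ρ := mul_le_of_le_one_right hρ.le huy

end HarmonicMean

section MinkowskiAsymmetry

variable {ι : Type*} [Fintype ι] {K : Set E2} {s : ℝ} {w : ι → ℝ} {v : ι → E2}

lemma le_of_sub_singleton_subset_smul (hw : ∀ i, 0 ≤ w i) (hsum : ∑ i, w i = 1)
    (hbal : ∑ i, w i • v i = 0) (hv : ∀ i, ∀ x ∈ K, ⟪v i, x⟫ ≤ 1)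
    (hp : ∀ i, ∃ p ∈ K, ⟪v i, p⟫ = -s) {ρ : ℝ} (hρ : 0 < ρ) {c : E2}
    (hc : K - {c} ⊆ ρ • ({c} - K)) : s ≤ ρ := by
  have hbound (i : ι) : (1 + ρ) * ⟪v i, c⟫ ≤ ρ - s := by
    obtain ⟨p, hpK, hvp⟩ := hp i
    obtain ⟨_, ⟨_, rfl, k, hk, rfl⟩, hpk⟩ := hc (sub_mem_sub hpK (mem_singleton c))
    have hinner := congrArg (inner ℝ (v i)) hpk
    simp only [real_inner_smul_right, inner_sub_right, hvp] at hinner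
    have := mul_le_mul_of_nonneg_left (hv i k hk) hρ.le
    linarith
  have : 0 ≤ ρ - s :=
    calc 0 = (1 + ρ) * ⟪∑ i, w i • v i, c⟫ := by rw [hbal, inner_zero_left, mul_zero]
      _ = ∑ i, w i * ((1 + ρ) * ⟪v i, c⟫) := by
        simp only [sum_inner, real_inner_smul_left, Finset.mul_sum]
        exact Finset.sum_congr rfl fun i _ ↦ by ring
      _ ≤ ∑ i, w i * (ρ - s) :=
        Finset.sum_le_sum fun i _ ↦ mul_le_mul_of_nonneg_left (hbound i) (hw i)
      _ = ρ - s := by rw [← Finset.sum_mul, hsum, one_mul]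
  linarith

lemma minkAsym_eq (hs : 0 < s) (hK : K ⊆ s • -K) (hw : ∀ i, 0 ≤ w i) (hsum : ∑ i, w i = 1)
    (hbal : ∑ i, w i • v i = 0) (hv : ∀ i, ∀ x ∈ K, ⟪v i, x⟫ ≤ 1)
    (hp : ∀ i, ∃ p ∈ K, ⟪v i, p⟫ = -s) : minkAsym K = s := by
  have hmem : s ∈ {ρ : ℝ | 0 < ρ ∧ ∃ c : E2, K - {c} ⊆ ρ • ({c} - K)} := ⟨hs, 0, by simpa using hK⟩
  refine le_antisymm (csInf_le ⟨0, fun _ h ↦ h.1.le⟩ hmem) (le_csInf ⟨s, hmem⟩ ?_)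
  rintro ρ ⟨hρ, c, hc⟩
  exact le_of_sub_singleton_subset_smul hw hsum hbal hv hp hρ hc

end MinkowskiAsymmetry

section TrimmedBody

variable {E : Type*} [NormedAddCommGroup E] [InnerProductSpace ℝ E] {ι : Type*}
  {v : ι → E} {e x : E} {s s' r r' : ℝ}

/-- The body `T ∩ (-s • T)`, where `T` is the polyhedron `⟪v i, x⟫ ≤ 1` with normals `v i`. -/
def trimmedBody (v : ι → E) (s : ℝ) : Set E := ⋂ i, slab (v i) s 1

/-- The body `T ∩ (-s • T)` cut by the symmetric slab `|⟪e, x⟫| ≤ r`; varying `r` moves `γ` without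
changing the asymmetry. -/
def clippedBody (v : ι → E) (s : ℝ) (e : E) (r : ℝ) : Set E := trimmedBody v s ∩ slab e r r

lemma convex_clippedBody (v : ι → E) (s : ℝ) (e : E) (r : ℝ) :
    Convex ℝ (clippedBody v s e r) :=
  (convex_iInter fun i ↦ convex_slab (v i) s 1).inter (convex_slab e r r)

lemma isClosed_clippedBody (v : ι → E) (s : ℝ) (e : E) (r : ℝ) :
    IsClosed (clippedBody v s e r) :=
  (isClosed_iInter fun i ↦ isClosed_slab (v i) s 1).inter (isClosed_slab e r r)

lemma clippedBody_mem_nhds_zero [Finite ι] (v : ι → E) (e : E) (hs : 0 < s) (hr : 0 < r) :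
    clippedBody v s e r ∈ nhds 0 :=
  Filter.inter_mem (Filter.iInter_mem.2 fun i ↦ slab_mem_nhds_zero (v i) hs one_pos)
    (slab_mem_nhds_zero e hr hr)

lemma clippedBody_subset_slab (v : ι → E) (s : ℝ) (e : E) (r : ℝ) (i : ι) :
    clippedBody v s e r ⊆ slab (v i) s 1 :=
  inter_subset_left.trans (iInter_subset _ i)

lemma clippedBody_mono (hs : s ≤ s') : clippedBody v s e r ⊆ clippedBody v s' e r :=
  inter_subset_inter_left _ (iInter_mono fun _ ↦ slab_subset_slab hs le_rfl)

lemma clippedBody_eq_trimmedBody (h : trimmedBody v s ⊆ slab e r r) :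
    clippedBody v s e r = trimmedBody v s :=
  inter_eq_left.2 h

lemma neg_inv_smul_mem_clippedBody (hs : 1 ≤ s) (hr : 0 ≤ r)
    (hx : x ∈ clippedBody v s e r) : -(s⁻¹ • x) ∈ clippedBody v s e r := by
  have hs0 : 0 < s := by linarith
  have hinv : s⁻¹ ≤ 1 := inv_le_one_of_one_le₀ hs
  refine ⟨mem_iInter.2 fun i ↦ neg_mem_slab.2 ?_, neg_mem_slab.2 ?_⟩
  · refine slab_subset_slab ?_ ?_
      (smul_mem_slab (inv_nonneg.2 hs0.le) (clippedBody_subset_slab v s e r i hx))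
    · rw [inv_mul_cancel₀ hs0.ne']
    · linarith
  · have := mul_le_of_le_one_left hr hinv
    exact slab_subset_slab this this (smul_mem_slab (inv_nonneg.2 hs0.le) hx.2)

lemma clippedBody_subset_smul_neg (hs : 1 ≤ s) (hr : 0 ≤ r) :
    clippedBody v s e r ⊆ s • -clippedBody v s e r := by
  intro x hx
  rw [mem_smul_set_iff_inv_smul_mem₀ (by positivity)]
  exact neg_inv_smul_mem_clippedBody hs hr hx

lemma clippedBody_subset_max_smul (hs : 0 ≤ s) (hr' : 0 < r') :
    clippedBody v s e r ⊆ max 1 (r / r') • clippedBody v s e r' := by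
  intro x hx
  set l := max 1 (r / r')
  have hl0 : 0 < l := by positivity
  have hinv : l⁻¹ ≤ 1 := inv_le_one_of_one_le₀ (le_max_left _ _)
  have hlr : l⁻¹ * r ≤ r' := by
    rw [inv_mul_le_iff₀ hl0, ← div_le_iff₀ hr']
    exact le_max_right _ _
  rw [mem_smul_set_iff_inv_smul_mem₀ hl0.ne']
  refine ⟨mem_iInter.2 fun i ↦ ?_, ?_⟩
  · exact slab_subset_slab (mul_le_of_le_one_left hs hinv) (by linarith)
      (smul_mem_slab (by positivity) (clippedBody_subset_slab v s e r i hx))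
  · exact slab_subset_slab hlr hlr (smul_mem_slab (by positivity) hx.2)

end TrimmedBody

section TrimmedTriangle

variable {E : Type*} [NormedAddCommGroup E] [InnerProductSpace ℝ E]
  {v : Fin 3 → E} {w : Fin 3 → ℝ} {s : ℝ} {u x : E}

lemma inner_add_inner_add_inner_eq_zero (hbal : ∑ i, w i • v i = 0) {i j k : Fin 3}
    (huniv : Finset.univ = {i, j, k}) (hij : i ≠ j) (hik : i ≠ k) (hjk : j ≠ k) (y : E) :
    w i * ⟪v i, y⟫ + w j * ⟪v j, y⟫ + w k * ⟪v k, y⟫ = 0 := by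
  have hzero : ∑ l, w l * ⟪v l, y⟫ = 0 := by
    simpa [sum_inner, real_inner_smul_left] using congrArg (inner ℝ · y) hbal
  rwa [huniv, Finset.sum_insert (by simp [hij, hik]), Finset.sum_pair hjk, ← add_assoc] at hzero

-- Moving along `u` keeps the `i`-th and `j`-th values in range by choice of the step length; the
-- balance relation turns the remaining upper bound into `w j * (⟪v i, x⟫ - ⟪v j, x⟫) ≤ 1`.
lemma sub_smul_mem_trimmedBody (hw : ∀ i, 0 < w i) (hsum : ∑ i, w i = 1)
    (hbal : ∑ i, w i • v i = 0) (hws : ∀ i, w i * (s + 1) ≤ 1) (hs : 0 ≤ s)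
    (hx : ∀ i, -s ≤ ⟪v i, x⟫) {i j k : Fin 3} (huniv : Finset.univ = {i, j, k})
    (hij : i ≠ j) (hik : i ≠ k) (hjk : j ≠ k) (hui : ⟪v i, u⟫ = 1) (huj : ⟪v j, u⟫ = 1)
    (hi : 1 ≤ ⟪v i, x⟫) (hji : ⟪v j, x⟫ ≤ ⟪v i, x⟫) (hdiff : ⟪v i, x⟫ - ⟪v j, x⟫ ≤ s + 1) :
    x - (⟪v i, x⟫ - 1) • u ∈ trimmedBody v s := by
  have hwsum : w i + w j + w k = 1 := by
    rw [← hsum, huniv, Finset.sum_insert (by simp [hij, hik]), Finset.sum_pair hjk, add_assoc]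
  have hbalx := inner_add_inner_add_inner_eq_zero hbal huniv hij hik hjk x
  have hbalu := inner_add_inner_add_inner_eq_zero hbal huniv hij hik hjk u
  rw [hui, huj] at hbalu
  have hwjdiff : w j * (⟪v i, x⟫ - ⟪v j, x⟫) ≤ 1 :=
    (mul_le_mul_of_nonneg_left hdiff (hw j).le).trans (hws j)
  have huk : ⟪v k, u⟫ ≤ 0 := by
    have hneg : w k * ⟪v k, u⟫ ≤ 0 := by linarith [hw i, hw j]
    exact nonpos_of_mul_nonpos_right hneg (hw k)
  have hk : ⟪v k, x⟫ - (⟪v i, x⟫ - 1) * ⟪v k, u⟫ ≤ 1 := by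
    refine le_of_mul_le_mul_left ?_ (hw k)
    calc w k * (⟪v k, x⟫ - (⟪v i, x⟫ - 1) * ⟪v k, u⟫)
        = w j * (⟪v i, x⟫ - ⟪v j, x⟫) - w i - w j := by
          linear_combination hbalx - (⟪v i, x⟫ - 1) * hbalu
      _ ≤ w k * 1 := by linarith
  refine mem_iInter.2 fun l ↦ ?_
  have hl : l ∈ ({i, j, k} : Finset (Fin 3)) := huniv ▸ Finset.mem_univ l
  simp only [Finset.mem_insert, Finset.mem_singleton] at hl
  simp only [slab, mem_ofPred_eq, inner_sub_right, real_inner_smul_right, mem_Icc]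
  rcases hl with rfl | rfl | rfl
  · rw [hui]; constructor <;> linarith
  · rw [huj]; constructor <;> linarith
  · exact ⟨by nlinarith [hx l], hk⟩

lemma mem_of_sub_smul_mem_of_add_smul_mem {C : Set E} (hC : Convex ℝ C) {a b : ℝ} (ha : 0 ≤ a)
    (hb : 0 ≤ b) (hsub : x - a • u ∈ C) (hadd : x + b • u ∈ C) : x ∈ C := by
  refine hC.segment_subset hsub hadd (mem_segment_iff_sameRay.2 ?_)
  rw [sub_sub_cancel, add_sub_cancel_left]
  exact sameRay_smul_smul_of_mul_nonneg (mul_nonneg ha hb)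

lemma exists_univ_eq_of_ne {i j : Fin 3} (hij : i ≠ j) :
    ∃ k, i ≠ k ∧ j ≠ k ∧ (Finset.univ : Finset (Fin 3)) = {i, j, k} := by
  decide +revert

lemma mem_symmHull_trimmedBody (hw : ∀ i, 0 < w i) (hsum : ∑ i, w i = 1)
    (hbal : ∑ i, w i • v i = 0) (hws : ∀ i, w i * (s + 1) ≤ 1) (hs : 1 ≤ s)
    (hvert : ∀ k, ∃ u, ∀ i ≠ k, ⟪v i, u⟫ = 1) (hx : ∀ i, x ∈ slab (v i) s s)
    (hdiff : ∀ i j, ⟪v i, x⟫ - ⟪v j, x⟫ ≤ s + 1) : x ∈ symmHull (trimmedBody v s) := by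
  by_cases hle : ∀ i, ⟪v i, x⟫ ≤ 1
  · exact subset_symmHull _ (mem_iInter.2 fun i ↦ ⟨(hx i).1, hle i⟩)
  by_cases hge : ∀ i, -1 ≤ ⟪v i, x⟫
  · exact neg_subset_symmHull _ (mem_iInter.2 fun i ↦ neg_mem_slab.2 ⟨hge i, (hx i).2⟩)
  push Not at hle hge
  obtain ⟨i, hi⟩ := hle
  obtain ⟨j, hj⟩ := hge
  have hij : i ≠ j := by rintro rfl; linarith
  obtain ⟨k, hik, hjk, huniv⟩ := exists_univ_eq_of_ne hij
  obtain ⟨u, hu⟩ := hvert k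
  have hmem : x - (⟪v i, x⟫ - 1) • u ∈ trimmedBody v s :=
    sub_smul_mem_trimmedBody hw hsum hbal hws (by linarith) (fun l ↦ (hx l).1) huniv hij hik hjk
      (hu i hik) (hu j hjk) hi.le (by linarith) (hdiff i j)
  have hmem' : -x - (⟪v j, -x⟫ - 1) • u ∈ trimmedBody v s := by
    refine sub_smul_mem_trimmedBody hw hsum hbal hws (by linarith) (fun l ↦ ?_)
      (by rw [huniv, Finset.insert_comm]) hij.symm hjk hik (hu j hjk) (hu i hik) ?_ ?_ ?_ <;>
      simp only [inner_neg_right]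
    · linarith [(hx l).2]
    · linarith
    · linarith
    · linarith [hdiff i j]
  have hneg : x + (-⟪v j, x⟫ - 1) • u ∈ -trimmedBody v s := by
    rw [inner_neg_right] at hmem'
    rw [Set.mem_neg]
    convert hmem' using 1
    abel
  exact mem_of_sub_smul_mem_of_add_smul_mem (convex_convexHull ℝ _) (by linarith) (by linarith)
    (subset_symmHull _ hmem) (neg_subset_symmHull _ hneg)

end TrimmedTriangle

section GammaClippedBody

variable {ι : Type*} {v : ι → E2} {e q : E2} {s r A : ℝ}

lemma harmonicMean_clippedBody_subset (hs : 1 ≤ s) (hr : 0 < r) :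
    harmonicMean (clippedBody v s e r) ⊆ (2 * s / (s + 1)) • clippedBody v s e r := by
  have hs0 : 0 < s := by linarith
  have hl : 1 ≤ 2 * s / (s + 1) := by rw [one_le_div (by positivity)]; linarith
  have hl' : (2 * s / (s + 1))⁻¹ ≤ 1 := inv_le_one_of_one_le₀ hl
  intro x hx
  rw [mem_smul_set_iff_inv_smul_mem₀ (by positivity)]
  refine ⟨mem_iInter.2 fun i ↦ ?_, ?_⟩
  · have hxi := harmonicMean_subset_slab hs0 one_pos (clippedBody_subset_slab v s e r i) hx
    rw [mul_one] at hxi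
    have := smul_mem_slab (t := (2 * s / (s + 1))⁻¹) (by positivity) hxi
    rw [inv_mul_cancel₀ (by positivity)] at this
    exact slab_subset_slab hs le_rfl this
  · have hxe := harmonicMean_subset_slab hr hr inter_subset_right hx
    rw [show 2 * r * r / (r + r) = r by field_simp; ring] at hxe
    have hle := mul_le_of_le_one_left hr.le hl'
    exact slab_subset_slab hle hle (smul_mem_slab (by positivity) hxe)

lemma harmonicMean_clippedBody_subset_smul_symmHull (hs : 1 ≤ s) (hr : 0 < r) :
    harmonicMean (clippedBody v s e r) ⊆
      (2 * s / (s + 1)) • symmHull (clippedBody v s e r) :=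
  (harmonicMean_clippedBody_subset hs hr).trans (smul_set_mono (subset_symmHull _))

lemma exists_harmonicMean_clippedBody_subset (v : ι → E2) (e : E2) (hs : 1 ≤ s) (hr : 0 < r) :
    ∃ ρ : ℝ, 0 < ρ ∧
      harmonicMean (clippedBody v s e r) ⊆ ρ • symmHull (clippedBody v s e r) :=
  ⟨2 * s / (s + 1), by positivity, harmonicMean_clippedBody_subset_smul_symmHull hs hr⟩

lemma gammaB_clippedBody_le (v : ι → E2) (e : E2) (hs : 1 ≤ s) (hr : 0 < r) :
    gammaB (clippedBody v s e r) ≤ 2 * s / (s + 1) :=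
  gammaB_le (by positivity) (harmonicMean_clippedBody_subset_smul_symmHull hs hr)

lemma two_div_one_add_le_gammaB_clippedBody (hA : 1 ≤ A) (hAs : A ≤ s)
    (hq : q ∈ clippedBody v A e 1) (heq : ⟪e, q⟫ = 1) :
    2 / (1 + A) ≤ gammaB (clippedBody v s e 1) :=
  two_div_one_add_le_gammaB
    (exists_harmonicMean_clippedBody_subset v e (hA.trans hAs) one_pos) (by linarith)
    inter_subset_right (clippedBody_mono hAs hq)
    (clippedBody_mono hAs (neg_inv_smul_mem_clippedBody hA zero_le_one hq)) heq

lemma gammaB_trimmedBody_le {v : Fin 3 → E2} {w : Fin 3 → ℝ} (hs : 1 ≤ s) (hw : ∀ i, 0 < w i)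
    (hsum : ∑ i, w i = 1) (hbal : ∑ i, w i • v i = 0) (hws : ∀ i, w i * (s + 1) ≤ 1)
    (hvert : ∀ k, ∃ u, ∀ i ≠ k, ⟪v i, u⟫ = 1) :
    gammaB (trimmedBody v s) ≤ 2 / (s + 1) := by
  refine gammaB_le (by positivity) fun x hx ↦ ?_
  have hslab (i : Fin 3) : trimmedBody v s ⊆ slab (v i) s 1 := iInter_subset _ i
  have hpolar (i : Fin 3) : v i ∈ polarBody (trimmedBody v s) := by
    simpa using inv_smul_mem_polarBody one_pos (hslab i)
  rw [mem_smul_set_iff_inv_smul_mem₀ (by positivity)]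
  refine mem_symmHull_trimmedBody hw hsum hbal hws hs hvert (fun i ↦ ?_) fun i j ↦ ?_
  · have := smul_mem_slab (t := (2 / (s + 1))⁻¹) (by positivity)
      (harmonicMean_subset_slab (by linarith) one_pos (hslab i) hx)
    rwa [show (2 / (s + 1))⁻¹ * (2 * s * 1 / (s + 1)) = s by field_simp] at this
  · rw [real_inner_smul_right, real_inner_smul_right, ← mul_sub, inv_div, div_mul_eq_mul_div,
      div_le_iff₀ two_pos]
    exact mul_le_mul_of_nonneg_left (mem_harmonicMean.1 hx _ (hpolar i) _ (hpolar j))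
      (by linarith)

lemma continuousOn_Ioi_of_le_max_mul {f : ℝ → ℝ}
    (hf : ∀ x > 0, ∀ y > 0, f x ≤ max 1 (x / y) * max 1 (y / x) * f y) :
    ContinuousOn f (Ioi 0) := by
  intro y hy
  have hy0 : 0 < y := hy
  refine ContinuousAt.continuousWithinAt ?_
  set m : ℝ → ℝ := fun x ↦ max 1 (x / y) * max 1 (y / x) with hm
  have hmpos (x : ℝ) : 0 < m x := by positivity
  have hm1 : Filter.Tendsto m (nhds y) (nhds 1) := by
    have hcont : ContinuousAt m y := by
      simp only [hm]
      fun_prop (disch := exact hy0.ne')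
    simpa [hm, hy0.ne'] using hcont.tendsto
  have hlower : Filter.Tendsto (fun x ↦ (m x)⁻¹ * f y) (nhds y) (nhds (f y)) := by
    simpa using (hm1.inv₀ one_ne_zero).mul_const (f y)
  have hupper : Filter.Tendsto (fun x ↦ m x * f y) (nhds y) (nhds (f y)) := by
    simpa using hm1.mul_const (f y)
  refine tendsto_of_tendsto_of_tendsto_of_le_of_le' hlower hupper ?_ ?_ <;>
    filter_upwards [Ioi_mem_nhds hy0] with x hx
  · rw [inv_mul_le_iff₀ (hmpos x), hm]
    simpa only [mul_comm (max 1 (y / x))] using hf y hy0 x hx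
  · exact hf x hx y hy0

lemma continuousOn_gammaB_clippedBody (v : ι → E2) (e : E2) (hs : 1 ≤ s) :
    ContinuousOn (fun r ↦ gammaB (clippedBody v s e r)) (Ioi 0) := by
  have hs0 : 0 ≤ s := by linarith
  refine continuousOn_Ioi_of_le_max_mul fun x hx y hy ↦ ?_
  exact gammaB_le_mul (by positivity) (by positivity) (clippedBody_subset_max_smul hs0 hy)
    (clippedBody_subset_max_smul hs0 hx) (exists_harmonicMean_clippedBody_subset v e hs hy)

lemma exists_gammaB_clippedBody_eq {R γ : ℝ} (hs : 1 ≤ s) (hR : 1 ≤ R)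
    (hlower : gammaB (clippedBody v s e R) ≤ γ)
    (hupper : γ ≤ gammaB (clippedBody v s e 1)) :
    ∃ r, 1 ≤ r ∧ gammaB (clippedBody v s e r) = γ := by
  have hcont := (continuousOn_gammaB_clippedBody v e hs).mono
    (Icc_subset_Ioi_iff hR |>.2 one_pos)
  obtain ⟨r, hr, hγ⟩ := intermediate_value_Icc' hR hcont ⟨hlower, hupper⟩
  exact ⟨r, hr.1, hγ⟩

end GammaClippedBody

section Triangle

variable {s D r A : ℝ} {x : E2}

@[simp] lemma pt_apply_zero (a b : ℝ) : pt a b 0 = a := rfl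

@[simp] lemma pt_apply_one (a b : ℝ) : pt a b 1 = b := rfl

lemma inner_pt (a b : ℝ) (x : E2) : ⟪pt a b, x⟫ = a * x 0 + b * x 1 := by
  simp [PiLp.inner_apply, mul_comm]

/-- The normals `v i` of the triangle `T = {x | ⟪v i, x⟫ ≤ 1}` for which `T ∩ (-s • T)` touches the
edges of `-s • T` in the points `(-1, -1)`, `(1, -1)` and `(-D, s)`. The parameter `D` measures the
deviation of `T` from being isosceles; for `s = 1` the triangle degenerates to a strip. -/
def triangleNormal (s D : ℝ) : Fin 3 → E2 :=
  ![pt ((s ^ 2 - 1) / (s + D)) ((s * D + 1) / (s + D)),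
    pt (-(s ^ 2 - 1) / (s - D)) ((1 - s * D) / (s - D)), pt 0 (-1)]

/-- The barycentric coordinates of `0` with respect to the normals `triangleNormal s D`. -/
def triangleWeight (s D : ℝ) : Fin 3 → ℝ :=
  ![(s + D) / (2 * (s + 1)), (s - D) / (2 * (s + 1)), 1 / (s + 1)]

lemma triangleWeight_pos (hs : 1 ≤ s) (hD0 : 0 ≤ D) (hDs : D < s) (i : Fin 3) :
    0 < triangleWeight s D i := by
  have := sub_pos.2 hDs
  fin_cases i <;> simp only [triangleWeight, Fin.zero_eta, Fin.mk_one, Fin.reduceFinMk,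
    Matrix.cons_val] <;> positivity

lemma sum_triangleWeight (hs : 1 ≤ s) : ∑ i, triangleWeight s D i = 1 := by
  have : s + 1 ≠ 0 := by positivity
  simp only [Fin.sum_univ_three, triangleWeight, Matrix.cons_val]
  field_simp
  ring

lemma sum_triangleWeight_smul_triangleNormal (hs : 1 ≤ s) (hD0 : 0 ≤ D) (hDs : D < s) :
    ∑ i, triangleWeight s D i • triangleNormal s D i = 0 := by
  have hsD := sub_pos.2 hDs
  ext j
  fin_cases j <;>
    simp [Fin.sum_univ_three, triangleWeight, triangleNormal] <;> field_simp <;> ring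

lemma triangleWeight_mul_le_one (hs : 1 ≤ s) (hD0 : 0 ≤ D) (hD : D ≤ 2 - s) (i : Fin 3) :
    triangleWeight s D i * (s + 1) ≤ 1 := by
  fin_cases i <;> simp [triangleWeight] <;> field_simp <;> linarith

lemma exists_forall_ne_inner_triangleNormal_eq_one (hs : 1 < s) (hD0 : 0 ≤ D) (hDs : D < s)
    (k : Fin 3) : ∃ u, ∀ i ≠ k, ⟪triangleNormal s D i, u⟫ = 1 := by
  have hs1 := sub_pos.2 hs
  have hsD := sub_pos.2 hDs
  refine ⟨![pt (-(1 - D) / (s - 1)) (-1), pt ((1 + D) / (s - 1)) (-1), pt (-D) s] k, ?_⟩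
  intro i hik
  fin_cases k <;> fin_cases i <;> simp [triangleNormal, inner_pt] at hik ⊢ <;> field_simp <;> ring

lemma mem_slab_pt_div {a b c : ℝ} (hc : 0 < c) :
    x ∈ slab (pt (a / c) (b / c)) A 1 ↔ a * x 0 + b * x 1 ∈ Icc (-(A * c)) c := by
  have hinner : ⟪pt (a / c) (b / c), x⟫ = (a * x 0 + b * x 1) / c := by
    rw [inner_pt]
    ring
  rw [slab, mem_ofPred_eq, hinner, mem_Icc, le_div_iff₀ hc, div_le_one hc, neg_mul, mem_Icc]

lemma mem_trimmedBody_triangleNormal (hs : 1 ≤ s) (hD0 : 0 ≤ D) (hDs : D < s) :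
    x ∈ trimmedBody (triangleNormal s D) A ↔
      (s ^ 2 - 1) * x 0 + (s * D + 1) * x 1 ∈ Icc (-(A * (s + D))) (s + D) ∧
      -(s ^ 2 - 1) * x 0 + (1 - s * D) * x 1 ∈ Icc (-(A * (s - D))) (s - D) ∧
      x 1 ∈ Icc (-1) A := by
  have hthird : x ∈ slab (pt 0 (-1)) A 1 ↔ x 1 ∈ Icc (-1) A := by
    simp [slab, inner_pt, neg_le, and_comm]
  rw [← mem_slab_pt_div (by linarith), ← mem_slab_pt_div (sub_pos.2 hDs), ← hthird,
    trimmedBody, mem_iInter, Fin.forall_fin_succ, Fin.forall_fin_two]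
  rfl

lemma mem_slab_pt_one_zero : x ∈ slab (pt 1 0) r r ↔ x 0 ∈ Icc (-r) r := by
  simp [slab, inner_pt]

lemma exists_mem_inner_triangleNormal_eq_neg (hs : 1 ≤ s) (hD0 : 0 ≤ D) (hD : D ≤ 2 - s)
    (hDs : D < s) (hr : 1 ≤ r) (i : Fin 3) :
    ∃ p ∈ clippedBody (triangleNormal s D) s (pt 1 0) r, ⟪triangleNormal s D i, p⟫ = -s := by
  have : 0 < s + D := by linarith
  have hsm : 0 < s - D := sub_pos.2 hDs
  refine ⟨![pt (-1) (-1), pt 1 (-1), pt (-D) s] i, ⟨?_, mem_slab_pt_one_zero.2 ?_⟩, ?_⟩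
  · rw [mem_trimmedBody_triangleNormal hs hD0 hDs]
    fin_cases i <;>
      simp only [Fin.zero_eta, Fin.mk_one, Fin.reduceFinMk, Matrix.cons_val, pt_apply_zero,
        pt_apply_one, mem_Icc] <;>
      refine ⟨⟨?_, ?_⟩, ⟨?_, ?_⟩, ?_, ?_⟩ <;> nlinarith
  · fin_cases i <;> constructor <;> simp <;> linarith
  · fin_cases i <;> simp [triangleNormal, inner_pt] <;> field_simp <;> ring

lemma trimmedBody_triangleNormal_subset_slab (hs : 1 < s) (hD0 : 0 ≤ D) (hD : D ≤ 2 - s) :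
    trimmedBody (triangleNormal s D) s ⊆
      slab (pt 1 0) ((1 + D) / (s - 1)) ((1 + D) / (s - 1)) := by
  intro x hx
  obtain ⟨⟨-, h0⟩, ⟨-, h1⟩, hx1, -⟩ :=
    (mem_trimmedBody_triangleNormal hs.le hD0 (by linarith)).1 hx
  have hsD : 0 ≤ 1 - s * D := by nlinarith
  have hs1 : 0 < s - 1 := sub_pos.2 hs
  rw [mem_slab_pt_one_zero, mem_Icc, neg_le, le_div_iff₀ hs1, le_div_iff₀ hs1]
  constructor <;> refine le_of_mul_le_mul_right ?_ (by linarith : 0 < s + 1)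
  · nlinarith [mul_nonneg hsD (by linarith : 0 ≤ x 1 + 1)]
  · nlinarith [mul_nonneg (by positivity : 0 ≤ s * D + 1) (by linarith : 0 ≤ x 1 + 1)]

lemma isBounded_clippedBody_triangleNormal (hs : 1 ≤ s) (hD0 : 0 ≤ D) (hDs : D < s) :
    Bornology.IsBounded (clippedBody (triangleNormal s D) s (pt 1 0) r) := by
  refine ((PiLp.antilipschitzWith_ofLp 2 _).isBounded_preimage
    (Metric.isBounded_Icc ![-r, -1] ![r, s])).subset fun x hx ↦ ?_
  have h0 := mem_slab_pt_one_zero.1 hx.2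
  have h1 := ((mem_trimmedBody_triangleNormal hs hD0 hDs).1 hx.1).2.2
  constructor <;> intro j <;> fin_cases j
  exacts [h0.1, h1.1, h0.2, h1.2]

lemma isConvexBody_clippedBody_triangleNormal (hs : 1 ≤ s) (hD0 : 0 ≤ D) (hDs : D < s)
    (hr : 0 < r) : IsConvexBody (clippedBody (triangleNormal s D) s (pt 1 0) r) :=
  ⟨convex_clippedBody _ _ _ _,
    Metric.isCompact_of_isClosed_isBounded (isClosed_clippedBody _ _ _ _)
      (isBounded_clippedBody_triangleNormal hs hD0 hDs),
    0, mem_interior_iff_mem_nhds.2 (clippedBody_mem_nhds_zero _ _ (by linarith) hr)⟩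

lemma minkAsym_clippedBody_triangleNormal (hs : 1 ≤ s) (hD0 : 0 ≤ D) (hD : D ≤ 2 - s)
    (hDs : D < s) (hr : 1 ≤ r) :
    minkAsym (clippedBody (triangleNormal s D) s (pt 1 0) r) = s :=
  minkAsym_eq (by linarith) (clippedBody_subset_smul_neg hs (by linarith))
    (fun i ↦ (triangleWeight_pos hs hD0 hDs i).le) (sum_triangleWeight hs)
    (sum_triangleWeight_smul_triangleNormal hs hD0 hDs)
    (fun i _ hx ↦ (clippedBody_subset_slab _ _ _ _ i hx).2)
    (exists_mem_inner_triangleNormal_eq_neg hs hD0 hD hDs hr)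

lemma exists_gammaB_clippedBody_triangleNormal_le (hs : 1 ≤ s) (hD0 : 0 ≤ D) (hD : D ≤ 2 - s)
    (hDs : D < s) :
    ∃ R, 1 ≤ R ∧ gammaB (clippedBody (triangleNormal s D) s (pt 1 0) R) ≤ 2 / (s + 1) := by
  obtain rfl | hs := hs.eq_or_lt
  · exact ⟨1, le_rfl, by simpa using gammaB_clippedBody_le _ _ le_rfl one_pos⟩
  refine ⟨(1 + D) / (s - 1), by rw [one_le_div (by linarith)]; linarith, ?_⟩
  rw [clippedBody_eq_trimmedBody (trimmedBody_triangleNormal_subset_slab hs hD0 hD)]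
  exact gammaB_trimmedBody_le hs.le (triangleWeight_pos hs.le hD0 hDs)
    (sum_triangleWeight hs.le) (sum_triangleWeight_smul_triangleNormal hs.le hD0 hDs)
    (triangleWeight_mul_le_one hs.le hD0 hD)
    (exists_forall_ne_inner_triangleNormal_eq_one hs hD0 hDs)

/-- Some Minkowski centered convex body in the plane has asymmetry `s` and `gammaB` equal
to `γ`. -/
def IsRealizable (γ s : ℝ) : Prop :=
  ∃ K : Set E2, IsConvexBody K ∧ MinkCentered K ∧ minkAsym K = s ∧ gammaB K = γ

lemma isRealizable_of_mem_clippedBody {γ h : ℝ} (hD0 : 0 ≤ D) (hD : D ≤ 2 - s) (hDs : D < s)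
    (hA : 1 ≤ A) (hAs : A ≤ s)
    (hq : pt 1 h ∈ clippedBody (triangleNormal s D) A (pt 1 0) 1)
    (hγ : γ ∈ Icc (2 / (s + 1)) (2 / (1 + A))) : IsRealizable γ s := by
  have hs : 1 ≤ s := hA.trans hAs
  obtain ⟨R, hR, hγR⟩ := exists_gammaB_clippedBody_triangleNormal_le hs hD0 hD hDs
  have hγ1 : 2 / (1 + A) ≤ gammaB (clippedBody (triangleNormal s D) s (pt 1 0) 1) :=
    two_div_one_add_le_gammaB_clippedBody hA hAs hq (by simp [inner_pt])
  obtain ⟨r, hr, hγr⟩ :=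
    exists_gammaB_clippedBody_eq hs hR (hγR.trans hγ.1) (hγ.2.trans hγ1)
  have hasym := minkAsym_clippedBody_triangleNormal hs hD0 hD hDs hr
  refine ⟨_, isConvexBody_clippedBody_triangleNormal hs hD0 hDs (by linarith), ?_, hasym, hγr⟩
  rw [MinkCentered, hasym]
  exact clippedBody_subset_smul_neg hs (by linarith)

end Triangle

section OptimalBound

variable {s t D γ : ℝ}

lemma one_lt_phiR : 1 < phiR := Real.one_lt_goldenRatio

lemma phiR_sq : phiR ^ 2 = phiR + 1 := Real.goldenRatio_sq

lemma sq_le_add_one_of_le_phiR (hs : 1 ≤ s) (hsφ : s ≤ phiR) : s ^ 2 ≤ s + 1 := by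
  nlinarith [phiR_sq, one_lt_phiR]

lemma add_one_lt_sq_of_phiR_lt (hs : phiR < s) : s + 1 < s ^ 2 := by
  nlinarith [phiR_sq, one_lt_phiR]

lemma isRealizable_of_le_phiR (hs : 1 ≤ s) (hsφ : s ≤ phiR) (hγ : γ ∈ Icc (2 / (s + 1)) 1) :
    IsRealizable γ s := by
  have hs2 := sq_le_add_one_of_le_phiR hs hsφ
  have hq : pt 1 0 ∈ clippedBody (triangleNormal s 0) 1 (pt 1 0) 1 := by
    refine ⟨(mem_trimmedBody_triangleNormal hs le_rfl (by linarith)).2 ?_,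
      mem_slab_pt_one_zero.2 (by simp)⟩
    simp only [pt_apply_zero, pt_apply_one, mem_Icc]
    refine ⟨⟨?_, ?_⟩, ⟨?_, ?_⟩, ?_, ?_⟩ <;> nlinarith
  exact isRealizable_of_mem_clippedBody le_rfl (by nlinarith) (by linarith) le_rfl hs hq
    ⟨hγ.1, by linarith [hγ.2]⟩

/-- The value `2 / (1 + A)`, where `q` is the point with first coordinate `1` on the edge
`⟪v 0, ·⟫ = 1` of the triangle with normals `v = triangleNormal s D`, and `A` is such that
`-(A⁻¹ • q)` lies on the edge `⟪v 1, ·⟫ = 1`. -/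
def edgeRatio (s D : ℝ) : ℝ := (s - D) * (s * D + 1) / ((s ^ 2 - 1) * (D + 1))

lemma edgeRatio_pos (hs : 1 < s) (hD0 : 0 ≤ D) (hDs : D < s) : 0 < edgeRatio s D := by
  have hs2 : 0 < s ^ 2 - 1 := by nlinarith
  have : 0 < s - D := sub_pos.2 hDs
  unfold edgeRatio
  positivity

lemma edgeRatio_le_one (hs : phiR < s) (hD0 : 0 ≤ D) : edgeRatio s D ≤ 1 := by
  have hs1 := one_lt_phiR
  have hs2 := add_one_lt_sq_of_phiR_lt hs
  rw [edgeRatio, div_le_one (by apply mul_pos <;> linarith)]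
  nlinarith [mul_nonneg hD0 hD0]

lemma two_div_add_one_le_edgeRatio (hs : 1 < s) (hD0 : 0 ≤ D) (hD : D ≤ 2 - s) :
    2 / (s + 1) ≤ edgeRatio s D := by
  have hprod : 2 * (s - 1) * (D + 1) ≤ (s - D) * (s * D + 1) := by
    apply mul_le_mul <;> nlinarith
  rw [edgeRatio, div_le_div_iff₀ (by linarith) (by apply mul_pos <;> nlinarith)]
  nlinarith

lemma one_le_two_div_edgeRatio_sub_one (hs : phiR < s) (hD0 : 0 ≤ D) (hDs : D < s) :
    1 ≤ 2 / edgeRatio s D - 1 := by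
  rw [le_sub_iff_add_le, le_div_iff₀ (edgeRatio_pos (one_lt_phiR.trans hs) hD0 hDs)]
  linarith [edgeRatio_le_one hs hD0]

lemma pt_mem_clippedBody_edgeRatio (hs : phiR < s) (hD0 : 0 ≤ D) (hD : D ≤ 2 - s) :
    pt 1 ((s + D + 1 - s ^ 2) / (s * D + 1)) ∈
      clippedBody (triangleNormal s D) (2 / edgeRatio s D - 1) (pt 1 0) 1 := by
  have hs1 : 1 < s := one_lt_phiR.trans hs
  have hs2 := add_one_lt_sq_of_phiR_lt hs
  have hDs : D < s := by linarith
  have hsm : 0 < s - D := sub_pos.2 hDs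
  have hsD : 0 < s * D + 1 := by positivity
  set h := (s + D + 1 - s ^ 2) / (s * D + 1) with hh
  set A := 2 / edgeRatio s D - 1 with hA
  have hh1 : -1 ≤ h := by rw [hh, le_div_iff₀ hsD]; nlinarith
  have hh1' : h ≤ 1 := by rw [hh, div_le_one hsD]; nlinarith
  have hA1 : 1 ≤ A := one_le_two_div_edgeRatio_sub_one hs hD0 hDs
  have hedge0 : (s ^ 2 - 1) * 1 + (s * D + 1) * h = s + D := by rw [hh]; field_simp; ring
  have hedge1 : -(s ^ 2 - 1) * 1 + (1 - s * D) * h = -(A * (s - D)) := by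
    rw [hh, hA, edgeRatio]; field_simp; ring
  refine ⟨(mem_trimmedBody_triangleNormal hs1.le hD0 hDs).2 ?_,
    mem_slab_pt_one_zero.2 (by simp)⟩
  simp only [pt_apply_zero, pt_apply_one]
  rw [hedge0, hedge1]
  refine ⟨⟨?_, ?_⟩, ⟨?_, ?_⟩, ?_, ?_⟩ <;> nlinarith

lemma isRealizable_of_le_edgeRatio (hs : phiR < s) (hD : D ∈ Icc 0 (2 - s))
    (hγ : γ ∈ Icc (2 / (s + 1)) (edgeRatio s D)) : IsRealizable γ s := by
  have hs1 : 1 < s := one_lt_phiR.trans hs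
  have hDs : D < s := by linarith [hD.2]
  have hAs : 2 / edgeRatio s D - 1 ≤ s := by
    have hge := two_div_add_one_le_edgeRatio hs1 hD.1 hD.2
    rw [sub_le_iff_le_add, div_le_iff₀ (edgeRatio_pos hs1 hD.1 hDs)]
    rwa [div_le_iff₀' (by linarith)] at hge
  have hratio : edgeRatio s D = 2 / (1 + (2 / edgeRatio s D - 1)) := by
    rw [add_sub_cancel, div_div_cancel₀ two_ne_zero]
  exact isRealizable_of_mem_clippedBody hD.1 hD.2 hDs
    (one_le_two_div_edgeRatio_sub_one hs hD.1 hDs) hAs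
    (pt_mem_clippedBody_edgeRatio hs hD.1 hD.2) (hratio ▸ hγ)

lemma sq_sqrt_mul_sq_sub_one (hs : 1 ≤ s) : √(s * (s ^ 2 - 1)) ^ 2 = s * (s ^ 2 - 1) :=
  Real.sq_sqrt (mul_nonneg (by linarith) (by nlinarith))

lemma cExpr2_eq_div (hs : 1 < s) :
    cExpr2 s = (s ^ 2 + 2 * s - 1 - 2 * √(s * (s ^ 2 - 1))) / (s ^ 2 - 1) := by
  have hs2 : 0 < s ^ 2 - 1 := by nlinarith
  have hden : 0 < s ^ 2 + 2 * s - 1 + 2 * √(s * (s ^ 2 - 1)) := by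
    linarith [Real.sqrt_nonneg (s * (s ^ 2 - 1))]
  rw [cExpr2, div_eq_div_iff (by positivity) (by positivity)]
  linear_combination 4 * (s ^ 2 - 1) * sq_sqrt_mul_sq_sub_one hs.le

-- `D = √(s * (s ^ 2 - 1)) / s - 1` is the maximizer of `edgeRatio s`.
lemma cExpr2_eq_edgeRatio (hs : 1 < s) :
    cExpr2 s = edgeRatio s (√(s * (s ^ 2 - 1)) / s - 1) := by
  have hs2 : 0 < s ^ 2 - 1 := by nlinarith
  have : 0 < √(s * (s ^ 2 - 1)) := Real.sqrt_pos.2 (by positivity)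
  have hw2 := sq_sqrt_mul_sq_sub_one hs.le
  rw [cExpr2_eq_div hs, edgeRatio, sub_add_cancel, div_eq_div_iff (by positivity) (by positivity)]
  field_simp
  linear_combination -hw2

lemma cExpr3_eq_edgeRatio (hs : 1 < s) (hs2 : s ≤ 2) : cExpr3 s = edgeRatio s (2 - s) := by
  have hs1 : s ^ 2 - 1 ≠ 0 := by nlinarith
  have hsub : s - 3 ≠ 0 := by linarith
  have hadd : s + 1 ≠ 0 := by linarith
  have hden : 2 - s + 1 ≠ 0 := by linarith
  rw [cExpr3, edgeRatio, div_eq_div_iff (mul_ne_zero hsub hadd) (mul_ne_zero hs1 hden)]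
  ring

-- On the roots of the cubic the maximizer of `edgeRatio t` is the end point `2 - t`.
lemma cExpr2_eq_cExpr3_of_cubic_eq_zero (ht : 1 < t) (ht2 : t ≤ 2)
    (hroot : t ^ 3 - 7 * t ^ 2 + 9 * t + 1 = 0) : cExpr2 t = cExpr3 t := by
  have hw : √(t * (t ^ 2 - 1)) = t * (3 - t) := by
    rw [show t * (t ^ 2 - 1) = (t * (3 - t)) ^ 2 by linear_combination -t * hroot]
    exact Real.sqrt_sq (mul_nonneg (by linarith) (by linarith))
  rw [cExpr2_eq_edgeRatio ht, cExpr3_eq_edgeRatio ht ht2, hw, mul_div_cancel_left₀ _ (by linarith)]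
  congr 1
  ring

lemma cubic_phiR_pos : 0 < phiR ^ 3 - 7 * phiR ^ 2 + 9 * phiR + 1 := by
  have hφ := one_lt_phiR
  have hcube : phiR ^ 3 = 2 * phiR + 1 := by linear_combination (phiR + 1) * phiR_sq
  rw [hcube, phiR_sq]
  nlinarith [phiR_sq]

lemma cubic_nonneg_of_le_sHat (hs : phiR < s) (hs2 : s ≤ 2) (hsHat : s ≤ sHat) :
    0 ≤ s ^ 3 - 7 * s ^ 2 + 9 * s + 1 := by
  by_contra! hneg
  have hcont : ContinuousOn (fun t : ℝ ↦ t ^ 3 - 7 * t ^ 2 + 9 * t + 1) (Icc phiR s) := by fun_prop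
  obtain ⟨t, ⟨hφt, hts⟩, hroot⟩ := intermediate_value_Ioo' hs.le hcont ⟨hneg, cubic_phiR_pos⟩
  have ht : cExpr2 t = cExpr3 t :=
    cExpr2_eq_cExpr3_of_cubic_eq_zero (one_lt_phiR.trans hφt) (by linarith) hroot
  have : sHat ≤ t := csInf_le ⟨phiR, fun _ h ↦ h.1.le⟩ ⟨hφt, by linarith, ht⟩
  linarith

lemma sqrt_div_sub_one_mem_Icc (hs : phiR < s) (hs2 : s ≤ 2) (hsHat : s ≤ sHat) :
    √(s * (s ^ 2 - 1)) / s - 1 ∈ Icc 0 (2 - s) := by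
  have hs0 : 0 < s := by linarith [one_lt_phiR]
  have hsq := add_one_lt_sq_of_phiR_lt hs
  have hcubic := cubic_nonneg_of_le_sHat hs hs2 hsHat
  constructor
  · rw [sub_nonneg, one_le_div hs0]
    exact Real.le_sqrt_of_sq_le (by nlinarith)
  · rw [sub_le_iff_le_add, div_le_iff₀ hs0]
    exact Real.sqrt_le_iff.2 ⟨by nlinarith, by nlinarith⟩

lemma exists_cFun_eq_edgeRatio (hs : phiR < s) (hs2 : s ≤ 2) :
    ∃ D ∈ Icc 0 (2 - s), cFun s = edgeRatio s D := by
  have hs1 : 1 < s := one_lt_phiR.trans hs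
  rw [cFun, if_neg hs.not_ge]
  split_ifs with hsHat
  · exact ⟨_, sqrt_div_sub_one_mem_Icc hs hs2 hsHat, cExpr2_eq_edgeRatio hs1⟩
  · exact ⟨2 - s, ⟨by linarith, le_rfl⟩, cExpr3_eq_edgeRatio hs1 hs2⟩

end OptimalBound

theorem stmt13 (γ s : ℝ) (hs1 : 1 ≤ s) (hs2 : s ≤ 2)
    (hγ1 : 2 / (s + 1) ≤ γ) (hγ2 : γ ≤ cFun s) :
    ∃ K : Set E2, IsConvexBody K ∧ MinkCentered K ∧ minkAsym K = s ∧ gammaB K = γ := by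
  rcases le_or_gt s phiR with hs | hs
  · rw [cFun, if_pos hs] at hγ2
    exact isRealizable_of_le_phiR hs1 hs ⟨hγ1, hγ2⟩
  · obtain ⟨D, hD, hc⟩ := exists_cFun_eq_edgeRatio hs hs2
    exact isRealizable_of_le_edgeRatio hs hD ⟨hγ1, hc ▸ hγ2⟩
end
end

section
/- For every s ∈ [1,2] one has ((s+1)/2)·c(s) ≤ (φ+1)/2, with equality if and only if s = φ. -/
open scoped Pointwise RealInnerProductSpace
open Set

noncomputable section

/-!
Past `φ` both non-trivial branches of `((s + 1) / 2) * c(s)` are compared with the target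
`(φ + 1) / 2 = φ ^ 2 / 2`. For the branch with the square root, `s ^ 2 - 1 ≥ s` gives
`√(s * (s ^ 2 - 1)) ≥ s`, with equality at `φ`; replacing the root by `s` leaves a rational
function whose difference from the target has the factor `s - φ`. For the last branch, clearing
the denominator leaves a quadratic in `s` of discriminant `(18 - 13 * φ) / 4 < 0`. Each bound
holds on all of `(φ, 3)`, so the exact position of `ŝ` is irrelevant.
-/

section

open scoped goldenRatio

theorem three_halves_lt_goldenRatio : 3 / 2 < φ := by
  nlinarith [Real.goldenRatio_sq, Real.goldenRatio_pos, Real.goldenRatio_lt_two]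

theorem add_one_le_sq_of_goldenRatio_le {s : ℝ} (hs : φ ≤ s) : s + 1 ≤ s ^ 2 := by
  have factorization : s ^ 2 - (s + 1) = (s - φ) * (s + φ - 1) := by
    linear_combination Real.goldenRatio_sq
  have product_nonneg : 0 ≤ (s - φ) * (s + φ - 1) :=
    mul_nonneg (by linarith) (by linarith [Real.one_lt_goldenRatio])
  linarith

theorem le_sqrt_of_goldenRatio_le {s : ℝ} (hs : φ ≤ s) : s ≤ √(s * (s ^ 2 - 1)) := by
  have s_nonneg : 0 ≤ s := Real.goldenRatio_pos.le.trans hs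
  apply Real.le_sqrt_of_sq_le
  calc
    s ^ 2 = s * s := sq s
    _ ≤ s * (s ^ 2 - 1) := by
      gcongr
      linarith [add_one_le_sq_of_goldenRatio_le hs]

theorem sq_add_one_sq_lt_goldenRatio_sq_mul {s : ℝ} (hs : φ < s) (hs3 : s < 3) :
    (s ^ 2 + 1) ^ 2 < φ ^ 2 * ((s - 1) * (s ^ 2 + 4 * s - 1)) := by
  have factorization :
      (s ^ 2 + 1) ^ 2 - φ ^ 2 * ((s - 1) * (s ^ 2 + 4 * s - 1)) =
        (s - φ) * (s * (s ^ 2 - s - 1 - 4 * φ) + 1) := by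
    linear_combination (-(s - 1) * (s ^ 2 + 4 * s - 1) - 4 * s) * Real.goldenRatio_sq
  have cofactor_neg : s * (s ^ 2 - s - 1 - 4 * φ) + 1 < 0 := by
    have : s ^ 2 - s - 1 - 4 * φ < -1 := by
      nlinarith [three_halves_lt_goldenRatio]
    nlinarith [Real.one_lt_goldenRatio]
  linarith [mul_neg_of_pos_of_neg (sub_pos.mpr hs) cofactor_neg]

theorem goldenRatio_sq_div_two_mul_lt (s : ℝ) :
    φ ^ 2 / 2 * (s - 3) < s ^ 2 - 2 * s - 1 := by
  have complete_square :
      16 * (s ^ 2 - 2 * s - 1 - φ ^ 2 / 2 * (s - 3)) =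
        (4 * s - (φ + 5)) ^ 2 + (13 * φ - 18) := by
    linear_combination (23 - 8 * s) * Real.goldenRatio_sq
  linarith [sq_nonneg (4 * s - (φ + 5)), three_halves_lt_goldenRatio]

theorem add_one_div_two_mul_cExpr2 {s : ℝ} (hs : s + 1 ≠ 0) :
    (s + 1) / 2 * cExpr2 s =
      (s ^ 2 + 1) ^ 2 / (2 * ((s - 1) * (s ^ 2 + 2 * s - 1 + 2 * √(s * (s ^ 2 - 1))))) := by
  rw [cExpr2, div_mul_div_comm, ← mul_div_mul_left ((s ^ 2 + 1) ^ 2) _ hs]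
  congr 1
  ring

theorem add_one_div_two_mul_cExpr3 {s : ℝ} (hs : s + 1 ≠ 0) :
    (s + 1) / 2 * cExpr3 s = (s ^ 2 - 2 * s - 1) / (s - 3) := by
  rw [cExpr3, div_mul_div_comm,
    ← mul_div_mul_left (s ^ 2 - 2 * s - 1) _ (mul_ne_zero two_ne_zero hs)]
  congr 1 <;> ring

theorem add_one_div_two_mul_cExpr2_lt {s : ℝ} (hs : φ < s) (hs3 : s < 3) :
    (s + 1) / 2 * cExpr2 s < φ ^ 2 / 2 := by
  have one_lt_s : 1 < s := Real.one_lt_goldenRatio.trans hs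
  have s_le_sqrt := le_sqrt_of_goldenRatio_le hs.le
  have denom_pos : 0 < (s - 1) * (s ^ 2 + 2 * s - 1 + 2 * √(s * (s ^ 2 - 1))) :=
    mul_pos (by linarith) (by nlinarith)
  rw [add_one_div_two_mul_cExpr2 (by linarith), mul_comm 2, ← div_div]
  gcongr
  rw [div_lt_iff₀ denom_pos]
  calc
    (s ^ 2 + 1) ^ 2 < φ ^ 2 * ((s - 1) * (s ^ 2 + 4 * s - 1)) :=
      sq_add_one_sq_lt_goldenRatio_sq_mul hs hs3
    _ ≤ φ ^ 2 * ((s - 1) * (s ^ 2 + 2 * s - 1 + 2 * √(s * (s ^ 2 - 1)))) := by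
      gcongr ?_ * (?_ * ?_)
      linarith

theorem add_one_div_two_mul_cExpr3_lt {s : ℝ} (hs : s + 1 ≠ 0) (hs3 : s < 3) :
    (s + 1) / 2 * cExpr3 s < φ ^ 2 / 2 := by
  rw [add_one_div_two_mul_cExpr3 hs, div_lt_iff_of_neg (by linarith)]
  exact goldenRatio_sq_div_two_mul_lt s

end

theorem phiR_eq_goldenRatio : phiR = Real.goldenRatio := rfl

theorem cFun_of_le_phiR {s : ℝ} (hs : s ≤ phiR) : cFun s = 1 := if_pos hs

theorem add_one_div_two_mul_cFun_lt {s : ℝ} (hs : phiR < s) (hs3 : s < 3) :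
    (s + 1) / 2 * cFun s < (phiR + 1) / 2 := by
  rw [cFun, if_neg hs.not_ge, phiR_eq_goldenRatio, ← Real.goldenRatio_sq]
  rw [phiR_eq_goldenRatio] at hs
  split_ifs
  · exact add_one_div_two_mul_cExpr2_lt hs hs3
  · exact add_one_div_two_mul_cExpr3_lt (by linarith [Real.goldenRatio_pos]) hs3

/-- The bound `3` is the pole of `cExpr3`, just above which the inequality fails. -/
theorem stmt17_general (s : ℝ) (hs : s < 3) :
    ((s + 1) / 2) * cFun s ≤ (phiR + 1) / 2 ∧
      (((s + 1) / 2) * cFun s = (phiR + 1) / 2 ↔ s = phiR) := by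
  rcases le_or_gt s phiR with s_le | phiR_lt
  · rw [cFun_of_le_phiR s_le, mul_one]
    exact ⟨by linarith, fun h => by linarith, fun h => by rw [h]⟩
  · have strict := add_one_div_two_mul_cFun_lt phiR_lt hs
    exact ⟨strict.le, fun h => absurd h strict.ne, fun h => absurd h phiR_lt.ne'⟩

theorem stmt17 (s : ℝ) (hs1 : 1 ≤ s) (hs2 : s ≤ 2) :
    ((s + 1) / 2) * cFun s ≤ (phiR + 1) / 2 ∧
      (((s + 1) / 2) * cFun s = (phiR + 1) / 2 ↔ s = phiR) :=
  stmt17_general s (by linarith)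
end
end
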